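/- arXiv:1705.08869 — 2 statements merged into one kernel-verified Lean document; each statement's English description precedes it below -/
import Mathlib

section
/- Let d be odd, ω = exp(2πi/d), and define for each phase-space point x = (x_p, x_q) ∈ (ℤ/dℤ)² the reflection operator R(x) = d^{−1} · Σ_{λ ∈ (ℤ/dℤ)²} ω^{λ_q x_p − λ_p x_q} · T(λ), where T(λ_p, λ_q) = ω^{−λ_p λ_q (d+1)/2} Z^{λ_p} X^{λ_q} is the generalized translation operator. Then each R(x) is Hermitian (R(x)† = R(x)), self-inverse (R(x)² = I, hence unitary), and the R operators are Hilbert–Schmidt orthogonal: Tr(R(x)† R(x')) = d if x = x' and 0 otherwise. -/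
/-!
Writing `χ` for the standard additive character `a ↦ ω^a` of `ℤ/dℤ`, the translation operator has
entries `T(p, q)_{kj} = χ(pk - pq/2) [k = j + q]`. Summing over `q` in the definition of `R(x)`
forces `q = k - j`, and the remaining sum over `p` is a character sum with frequency
`(k + j)/2 - x_q`. Orthogonality of characters therefore gives the closed form (`Rmat_apply`)
`R(x)_{kj} = χ((k - j) x_p) [k + j = 2 x_q]`,
a reflection `j ↦ 2 x_q - j` of the basis decorated by phases. Hermiticity and `R(x)² = 1` are read
off from it, and the trace `Tr(R(x)† R(x'))` is supported on `x_q = x'_q` (as `2` is invertible),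
where it is a further character sum, with frequency `2 (x_p - x'_p)`.
-/

open Matrix

/-- The primitive `d`-th root of unity `ω = exp(2πi/d)`. -/
noncomputable def omega (d : ℕ) : ℂ := Complex.exp (2 * Real.pi * Complex.I / d)

/-- The `d`-dimensional clock matrix `Z`, diagonal with entries `Z_{jj} = ω^j`. -/
noncomputable def clock (d : ℕ) : Matrix (ZMod d) (ZMod d) ℂ :=
  Matrix.diagonal fun j => omega d ^ j.val

/-- The `d`-dimensional shift matrix `X`, with `X e_j = e_{j+1}` on the standard basis. -/
def shift (d : ℕ) : Matrix (ZMod d) (ZMod d) ℂ :=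
  Matrix.of fun k j => if k = j + 1 then 1 else 0

/-- The generalized translation (Weyl–Heisenberg) operator
`T(λ_p, λ_q) = ω^{−λ_p λ_q (d+1)/2} Z^{λ_p} X^{λ_q}`. -/
noncomputable def Tmat (d : ℕ) [NeZero d] (lam : ZMod d × ZMod d) : Matrix (ZMod d) (ZMod d) ℂ :=
  (omega d ^ (-((lam.1.val * lam.2.val * ((d + 1) / 2) : ℕ) : ℤ))) •
    (clock d ^ lam.1.val * shift d ^ lam.2.val)

/-- The reflection operator `R(x)`, the symplectic Fourier transform of the translation
operators: `R(x_p, x_q) = d⁻¹ Σ_λ ω^{λ_q x_p − λ_p x_q} T(λ_p, λ_q)`. -/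
noncomputable def Rmat (d : ℕ) [NeZero d] (x : ZMod d × ZMod d) : Matrix (ZMod d) (ZMod d) ℂ :=
  (d : ℂ)⁻¹ • ∑ lam : ZMod d × ZMod d,
    (omega d ^ ((lam.2.val : ℤ) * (x.1.val : ℤ) - (lam.1.val : ℤ) * (x.2.val : ℤ))) • Tmat d lam

open ZMod in
lemma omega_zpow (d : ℕ) [NeZero d] (n : ℤ) : omega d ^ n = stdAddChar (n : ZMod d) := by
  rw [stdAddChar_coe, omega, ← Complex.exp_int_mul]
  congr 1
  ring

open ZMod in
lemma omega_pow (d : ℕ) [NeZero d] (n : ℕ) : omega d ^ n = stdAddChar (n : ZMod d) := by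
  have := omega_zpow d n
  simpa using this

open ZMod in
lemma clock_pow (d : ℕ) [NeZero d] (n : ℕ) :
    clock d ^ n = Matrix.diagonal fun j => stdAddChar ((n : ZMod d) * j) := by
  rw [clock, Matrix.diagonal_pow]
  congr 1
  funext j
  rw [Pi.pow_apply, ← pow_mul, omega_pow]
  congr 1
  push_cast
  rw [natCast_zmod_val, mul_comm]

lemma shift_pow_apply (d : ℕ) [NeZero d] (n : ℕ) (k j : ZMod d) :
    (shift d ^ n) k j = if k = j + n then 1 else 0 := by
  induction n generalizing j with
  | zero => simp [Matrix.one_apply]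
  | succ n ih =>
    rw [pow_succ, Matrix.mul_apply]
    have hs (l : ZMod d) : shift d l j = if l = j + 1 then 1 else 0 := rfl
    simp only [hs, mul_ite, mul_one, mul_zero, Finset.sum_ite_eq', Finset.mem_univ, if_true, ih]
    congr 1
    push_cast
    rw [add_assoc, add_comm (1 : ZMod d)]

/-- For odd `d`, the integer `(d + 1) / 2` represents the inverse of `2` modulo `d`. -/
lemma two_mul_half (d : ℕ) (hd : Odd d) : (2 : ZMod d) * (((d + 1) / 2 : ℕ) : ZMod d) = 1 := by
  have h : 2 * ((d + 1) / 2) = d + 1 := by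
    obtain ⟨m, rfl⟩ := hd
    omega
  have h2 := congrArg (Nat.cast : ℕ → ZMod d) h
  push_cast at h2
  simpa using h2

lemma two_mul_cancel (d : ℕ) (hd : Odd d) {a b : ZMod d} (h : 2 * a = 2 * b) : a = b := by
  linear_combination (((d + 1) / 2 : ℕ) : ZMod d) * h - (a - b) * two_mul_half d hd

open ZMod in
/-- Orthogonality of the additive characters of `ℤ/dℤ`. -/
lemma sum_stdAddChar (d : ℕ) [NeZero d] (b : ZMod d) :
    ∑ p : ZMod d, stdAddChar (p * b) = if b = 0 then (d : ℂ) else 0 := by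
  have := AddChar.sum_mulShift b (isPrimitive_stdAddChar d)
  simpa [ZMod.card] using this

open ZMod in
lemma star_stdAddChar (d : ℕ) [NeZero d] (a : ZMod d) :
    star (stdAddChar a : ℂ) = stdAddChar (-a) := by
  rw [AddChar.map_neg_eq_conj]
  rfl

open ZMod in
lemma Tmat_apply (d : ℕ) [NeZero d] (p q k j : ZMod d) :
    Tmat d (p, q) k j =
      if k = j + q then stdAddChar (p * k - p * q * (((d + 1) / 2 : ℕ) : ZMod d)) else 0 := by
  rw [Tmat, Matrix.smul_apply, clock_pow, Matrix.diagonal_mul, shift_pow_apply, omega_zpow]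
  rw [Int.cast_neg, Int.cast_natCast]
  simp only [Nat.cast_mul, natCast_zmod_val, smul_eq_mul, mul_ite, mul_one, mul_zero]
  rw [← AddChar.map_add_eq_mul, neg_add_eq_sub]

open ZMod in
/-- The closed form of the reflection operator: it sends the basis vector `e_j` to a phase times
`e_{2 x_q - j}`. -/
lemma Rmat_apply (d : ℕ) [NeZero d] (hd : Odd d) (x : ZMod d × ZMod d) (k j : ZMod d) :
    Rmat d x k j = if k + j = 2 * x.2 then stdAddChar ((k - j) * x.1) else 0 := by
  set h : ZMod d := (((d + 1) / 2 : ℕ) : ZMod d) with hh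
  have h2 : 2 * h = 1 := two_mul_half d hd
  have hd0 : (d : ℂ) ≠ 0 := Nat.cast_ne_zero.mpr (NeZero.ne d)
  -- Only `q = k - j` contributes to the inner sum.
  have inner (p : ZMod d) : ∑ q : ZMod d,
      stdAddChar (q * x.1 - p * x.2) * Tmat d (p, q) k j =
      stdAddChar ((k - j) * x.1) * stdAddChar (p * ((k + j) * h - x.2)) := by
    rw [Finset.sum_eq_single (k - j)]
    · rw [Tmat_apply, if_pos (by ring), ← AddChar.map_add_eq_mul, ← AddChar.map_add_eq_mul]
      congr 1
      linear_combination -p * k * h2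
    · intro q _ hq
      rw [Tmat_apply, if_neg (fun e => hq (by rw [e]; ring)), mul_zero]
    · simp
  have key : ((k + j) * h - x.2 = 0) ↔ k + j = 2 * x.2 := by
    constructor
    · intro e
      linear_combination 2 * e - (k + j) * h2
    · intro e
      linear_combination h * e + x.2 * h2
  rw [Rmat, Matrix.smul_apply, Matrix.sum_apply, Fintype.sum_prod_type]
  simp only [Matrix.smul_apply, omega_zpow, smul_eq_mul, Int.cast_sub, Int.cast_mul,
    Int.cast_natCast, natCast_zmod_val, inner]
  rw [← Finset.mul_sum, sum_stdAddChar]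
  simp only [key]
  split_ifs
  · field_simp
  · simp

lemma Rmat_conjTranspose (d : ℕ) [NeZero d] (hd : Odd d) (x : ZMod d × ZMod d) :
    (Rmat d x)ᴴ = Rmat d x := by
  ext k j
  rw [Matrix.conjTranspose_apply, Rmat_apply d hd, Rmat_apply d hd, add_comm j k]
  split_ifs
  · rw [star_stdAddChar]
    congr 1
    ring
  · simp

open ZMod in
/-- The row-`k` sum defining a product of two reflection operators has the single nonzero term
`l = 2 x_q - k`. -/
lemma Rmat_mul_apply (d : ℕ) [NeZero d] (hd : Odd d) (x x' : ZMod d × ZMod d) (k j : ZMod d) :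
    (Rmat d x * Rmat d x') k j = if 2 * x.2 - k + j = 2 * x'.2 then
      stdAddChar ((2 * k - 2 * x.2) * x.1 + (2 * x.2 - k - j) * x'.1) else 0 := by
  rw [Matrix.mul_apply, Finset.sum_eq_single (2 * x.2 - k)]
  · rw [Rmat_apply d hd, Rmat_apply d hd, if_pos (by ring)]
    split_ifs
    · rw [← AddChar.map_add_eq_mul]
      congr 1
      ring
    · simp
  · intro l _ hl
    rw [Rmat_apply d hd, if_neg (fun e => hl (by rw [← e]; ring)), zero_mul]
  · simp

/-- For odd `d`, each reflection operator `R(x)` is Hermitian, self-inverse (hence unitary),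
and the `R` operators are Hilbert–Schmidt orthogonal:
`Tr(R(x)† R(x')) = d` if `x = x'` and `0` otherwise. -/
theorem Rmat_props (d : ℕ) [NeZero d] (hd : Odd d) (x x' : ZMod d × ZMod d) :
    (Rmat d x)ᴴ = Rmat d x ∧
    Rmat d x * Rmat d x = 1 ∧
    ((Rmat d x)ᴴ * Rmat d x').trace = if x = x' then (d : ℂ) else 0 := by
  refine ⟨Rmat_conjTranspose d hd x, ?_, ?_⟩
  · ext k j
    rw [Rmat_mul_apply d hd, Matrix.one_apply]
    by_cases hkj : k = j
    · subst hkj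
      rw [if_pos (by ring), if_pos rfl, ← AddChar.map_zero_eq_one (ZMod.stdAddChar (N := d))]
      congr 1
      ring
    · rw [if_neg hkj, if_neg]
      intro e
      exact hkj (by linear_combination -e)
  · rw [Rmat_conjTranspose d hd, Matrix.trace]
    simp only [Matrix.diag_apply, Rmat_mul_apply d hd, sub_add_cancel]
    by_cases hq : x.2 = x'.2
    · -- The trace is the character sum of frequency `2 (x_p - x'_p)`, recentred at `k = x_q`.
      have e (k : ZMod d) : (2 * k - 2 * x.2) * x.1 + (2 * x.2 - k - k) * x'.1 =
          (k - x.2) * (2 * (x.1 - x'.1)) := by ring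
      simp only [hq, if_true] at e ⊢
      simp only [e]
      refine (Equiv.sum_comp (Equiv.subRight x'.2)
        (fun k => (ZMod.stdAddChar (k * (2 * (x.1 - x'.1))) : ℂ))).trans ?_
      rw [sum_stdAddChar]
      congr 1
      rw [Prod.ext_iff, eq_iff_iff]
      constructor
      · intro h
        exact ⟨two_mul_cancel d hd (by linear_combination h), hq⟩
      · rintro ⟨h, -⟩
        rw [h]
        ring
    · rw [if_neg (fun h => hq (congrArg Prod.snd h))]
      refine Finset.sum_eq_zero fun k _ => if_neg fun h => hq (two_mul_cancel d hd h)
end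

section
/- Consider the nine two-qubit observables of the Peres–Mermin square, arranged as the 3×3 array with rows (X⊗I, I⊗X, X⊗X), (I⊗Z, Z⊗I, Z⊗Z), (X⊗Z, Z⊗X, Y⊗Y). Then the product of the three entries of each row equals I⊗I, the product of the three entries of the first column equals I⊗I, the product of the three entries of the second column equals I⊗I, but the product of the three entries of the third column equals −(I⊗I): (X⊗X)(Z⊗Z)(Y⊗Y) = −I⊗I. Hence no assignment of values ±1 to the nine observables can be consistent with all six row and column product constraints simultaneously. -/
/-!
By the mixed-product rule `(A ⊗ B) * (C ⊗ D) = (A * C) ⊗ (B * D)`, every row or column product is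
a Kronecker product of two products of Pauli matrices. These are scalar: the four lines without
`σy ⊗ σy` reduce to `σx² = σz² = 1`, and the two with it to `σx σz σy = -i` and `σz σx σy = i`,
whence `(-i) * i = 1` for the third row and `(-i) * (-i) = -1` for the third column.
A value assignment is impossible because the product of all nine values would be `1` computed
by rows and `-1` computed by columns.
-/

open Matrix

noncomputable section

/-- The Pauli matrix `X`. -/
def σx : Matrix (Fin 2) (Fin 2) ℂ := !![0, 1; 1, 0]

/-- The Pauli matrix `Y`. -/
def σy : Matrix (Fin 2) (Fin 2) ℂ := !![0, -Complex.I; Complex.I, 0]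

/-- The Pauli matrix `Z`. -/
def σz : Matrix (Fin 2) (Fin 2) ℂ := !![1, 0; 0, -1]

open Kronecker

lemma σx_mul_self : σx * σx = 1 := by
  simp [σx, Matrix.one_fin_two]

lemma σz_mul_self : σz * σz = 1 := by
  simp [σz, Matrix.one_fin_two]

lemma σx_mul_σz_mul_σy : σx * σz * σy = (-Complex.I) • 1 := by
  simp [σx, σz, σy, Matrix.one_fin_two]

lemma σz_mul_σx_mul_σy : σz * σx * σy = Complex.I • 1 := by
  simp [σx, σz, σy, Matrix.one_fin_two]

/-- Peres–Mermin square: each row product and the first two column products of the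
3×3 array of observables equal `I⊗I`, while the third column product equals `−(I⊗I)`;
hence no `±1`-valued assignment to the nine observables can satisfy all six row and
column product constraints simultaneously. -/
theorem peres_mermin_products :
    (σx ⊗ₖ (1 : Matrix (Fin 2) (Fin 2) ℂ)) * ((1 : Matrix (Fin 2) (Fin 2) ℂ) ⊗ₖ σx) *
        (σx ⊗ₖ σx) = 1 ∧
    ((1 : Matrix (Fin 2) (Fin 2) ℂ) ⊗ₖ σz) * (σz ⊗ₖ (1 : Matrix (Fin 2) (Fin 2) ℂ)) *
        (σz ⊗ₖ σz) = 1 ∧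
    (σx ⊗ₖ σz) * (σz ⊗ₖ σx) * (σy ⊗ₖ σy) = 1 ∧
    (σx ⊗ₖ (1 : Matrix (Fin 2) (Fin 2) ℂ)) * ((1 : Matrix (Fin 2) (Fin 2) ℂ) ⊗ₖ σz) *
        (σx ⊗ₖ σz) = 1 ∧
    ((1 : Matrix (Fin 2) (Fin 2) ℂ) ⊗ₖ σx) * (σz ⊗ₖ (1 : Matrix (Fin 2) (Fin 2) ℂ)) *
        (σz ⊗ₖ σx) = 1 ∧
    (σx ⊗ₖ σx) * (σz ⊗ₖ σz) * (σy ⊗ₖ σy) = -1 ∧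
    ¬ ∃ v : Fin 3 → Fin 3 → ℤ,
        (∀ i j, v i j = 1 ∨ v i j = -1) ∧
        (∀ i, v i 0 * v i 1 * v i 2 = 1) ∧
        v 0 0 * v 1 0 * v 2 0 = 1 ∧ v 0 1 * v 1 1 * v 2 1 = 1 ∧
        v 0 2 * v 1 2 * v 2 2 = -1 := by
  simp only [← mul_kronecker_mul, one_mul, mul_one, σx_mul_self, σz_mul_self,
    σx_mul_σz_mul_σy, σz_mul_σx_mul_σy, smul_kronecker, kronecker_smul, one_kronecker_one,
    smul_smul, true_and]
  refine ⟨by simp, by simp, ?_⟩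
  rintro ⟨v, -, hrow, hc0, hc1, hc2⟩
  have hrows : (v 0 0 * v 0 1 * v 0 2) * (v 1 0 * v 1 1 * v 1 2) *
      (v 2 0 * v 2 1 * v 2 2) = 1 := by
    rw [hrow, hrow, hrow]; norm_num
  have hcols : (v 0 0 * v 1 0 * v 2 0) * (v 0 1 * v 1 1 * v 2 1) *
      (v 0 2 * v 1 2 * v 2 2) = -1 := by
    rw [hc0, hc1, hc2]; norm_num
  have : (1 : ℤ) = -1 := by
    rw [← hcols, ← hrows]; ring
  norm_num at this
end
end
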